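/- Every edge of the Yang–Baxter graph strictly increases the order ⊴: (i) if v ∈ ℕ^N and 1 ≤ i ≤ N−1 with v_i < v_{i+1}, then v ◁ v·s_i; (ii) for every v ∈ ℕ^N, v ◁ vΦ. -/

import Mathlib

open Finset

/-- `u ≤_dom v`: for all `1 ≤ k ≤ N`, the sum of the first `k` entries of `u` is at most
the sum of the first `k` entries of `v`. -/
def domLE (N : ℕ) (u v : Fin N → ℕ) : Prop :=
  ∀ k : ℕ, 1 ≤ k → k ≤ N →
    (∑ j : Fin N, if (j : ℕ) < k then u j else 0) ≤
      ∑ j : Fin N, if (j : ℕ) < k then v j else 0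

/-- `decSort N u = u⁺` is the weakly decreasing rearrangement of `u`
(`Tuple.sort u` is the permutation sorting `u` increasingly; reversing indices yields the
weakly decreasing rearrangement). -/
noncomputable def decSort (N : ℕ) (u : Fin N → ℕ) : Fin N → ℕ :=
  fun j => u (Tuple.sort u j.rev)

/-- `u ⊴ v`: either (`u⁺ ≤_dom v⁺` and `u⁺ ≠ v⁺`) or (`u⁺ = v⁺` and `u ≤_dom v`). -/
def triLE (N : ℕ) (u v : Fin N → ℕ) : Prop :=
  (domLE N (decSort N u) (decSort N v) ∧ decSort N u ≠ decSort N v) ∨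
    (decSort N u = decSort N v ∧ domLE N u v)

/-- `u·s_i`: the vector `u` with its entries in positions `i` and `i+1` exchanged
(0-indexed). -/
def swapMove (N i : ℕ) (hi : i + 1 < N) (u : Fin N → ℕ) : Fin N → ℕ :=
  u ∘ ⇑(Equiv.swap (⟨i, Nat.lt_of_succ_lt hi⟩ : Fin N) ⟨i + 1, hi⟩)

/-- `uΦ = (u_2, u_3, …, u_N, u_1 + 1)`. -/
def phi (N : ℕ) (u : Fin N → ℕ) : Fin N → ℕ :=
  fun j => if h : (j : ℕ) + 1 < N then u ⟨(j : ℕ) + 1, h⟩ else u ⟨0, j.pos⟩ + 1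

/-- The edge relation of the Yang–Baxter graph on `ℕ^N`: an edge `u → u·s_i` whenever
`u_i < u_{i+1}`, and an edge `u → uΦ` for every `u`. -/
def ybEdge (N : ℕ) (u v : Fin N → ℕ) : Prop :=
  (∃ (i : ℕ) (hi : i + 1 < N),
      u ⟨i, Nat.lt_of_succ_lt hi⟩ < u ⟨i + 1, hi⟩ ∧ v = swapMove N i hi u) ∨
    v = phi N u

theorem decSort_comp_perm (N : ℕ) (u : Fin N → ℕ) (σ : Equiv.Perm (Fin N)) :
    decSort N (u ∘ σ) = decSort N u := by
  funext j
  have := congrFun (Tuple.comp_perm_comp_sort_eq_comp_sort (f := u) (σ := σ)) j.rev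
  simpa [decSort] using this

theorem decSort_mono (N : ℕ) (v w : Fin N → ℕ) (h : ∀ i, v i ≤ w i) (j : Fin N) :
    decSort N v j ≤ decSort N w j := by
  unfold decSort
  generalize j.rev = j
  by_contra hlt
  push Not at hlt
  have hmv := Tuple.monotone_sort v
  have hmw := Tuple.monotone_sort w
  have hsub : (Finset.Iic j).card ≤ (Finset.Iio j).card := by
    apply Finset.card_le_card_of_injOn (fun a => (Tuple.sort v).symm (Tuple.sort w a))
    · intro a ha
      simp only [Finset.coe_Iic, Set.mem_Iic] at ha
      simp only [Finset.coe_Iio, Set.mem_Iio]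
      by_contra hc
      push Not at hc
      have h1 := hmv hc
      have h2 := hmw ha
      simp only [Function.comp_apply, Equiv.apply_symm_apply] at h1 h2
      have h3 := h (Tuple.sort w a)
      omega
    · intro a _ b _ hab
      simpa using hab
  simp at hsub

theorem sum_decSort (N : ℕ) (u : Fin N → ℕ) : ∑ j, decSort N u j = ∑ j, u j := by
  unfold decSort
  exact Equiv.sum_comp (Fin.revPerm.trans (Tuple.sort u)) u

theorem domLE_swap (N i : ℕ) (hi : i + 1 < N) (v : Fin N → ℕ)
    (hv : v ⟨i, Nat.lt_of_succ_lt hi⟩ < v ⟨i + 1, hi⟩) : domLE N v (swapMove N i hi v) := by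
  intro k _ _
  by_cases hk : k ≤ i + 1
  · apply Finset.sum_le_sum
    intro j _
    split_ifs with hj
    · simp only [swapMove, Function.comp_apply]
      by_cases hji : j = ⟨i, Nat.lt_of_succ_lt hi⟩
      · subst hji
        rw [Equiv.swap_apply_left]
        exact hv.le
      · rw [Equiv.swap_apply_of_ne_of_ne hji]
        intro h
        subst h
        simp at hj
        omega
    · exact le_rfl
  · apply le_of_eq
    rw [← Equiv.sum_comp (Equiv.swap (⟨i, Nat.lt_of_succ_lt hi⟩ : Fin N) ⟨i + 1, hi⟩)]
    apply Finset.sum_congr rfl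
    intro j _
    simp only [swapMove, Function.comp_apply]
    by_cases hji : j = ⟨i, Nat.lt_of_succ_lt hi⟩
    · subst hji
      rw [Equiv.swap_apply_left, if_pos (by simp; omega), if_pos (by simp; omega)]
    · by_cases hji' : j = ⟨i + 1, hi⟩
      · subst hji'
        rw [Equiv.swap_apply_right, if_pos (by simp; omega), if_pos (by simp; omega)]
      · rw [Equiv.swap_apply_of_ne_of_ne hji hji']

theorem phi_eq (n : ℕ) (v : Fin (n + 1) → ℕ) :
    phi (n + 1) v = Function.update v 0 (v 0 + 1) ∘ finRotate (n + 1) := by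
  funext j
  refine Fin.lastCases ?_ (fun j => ?_) j
  · simp [phi]
  · have : finRotate (n + 1) j.castSucc = j.succ := by
      simp
    simp only [Function.comp_apply, this]
    rw [Function.update_of_ne (Fin.succ_ne_zero j)]
    simp [phi, Fin.succ]

theorem sum_phi (n : ℕ) (v : Fin (n + 1) → ℕ) :
    ∑ j, phi (n + 1) v j = ∑ j, v j + 1 := by
  rw [Fin.sum_univ_castSucc, Fin.sum_univ_succ v]
  have : ∀ j : Fin n, phi (n + 1) v j.castSucc = v j.succ := by
    intro j
    simp [phi, Fin.succ]
  simp only [this]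
  have h2 : phi (n + 1) v (Fin.last n) = v 0 + 1 := by simp [phi]
  rw [h2]
  ring

/-- every edge of the Yang–Baxter graph strictly increases `⊴`:
(i) if `v_i < v_{i+1}` then `v ◁ v·s_i`; (ii) `v ◁ vΦ`. -/
theorem stmt_16 (N : ℕ) (hN : 2 ≤ N) (v : Fin N → ℕ) :
    (∀ (i : ℕ) (hi : i + 1 < N), v ⟨i, Nat.lt_of_succ_lt hi⟩ < v ⟨i + 1, hi⟩ →
      triLE N v (swapMove N i hi v) ∧ v ≠ swapMove N i hi v) ∧
    (triLE N v (phi N v) ∧ v ≠ phi N v) := by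
  refine ⟨fun i hi hv => ⟨Or.inr ⟨(decSort_comp_perm N v _).symm, domLE_swap N i hi v hv⟩, ?_⟩, ?_⟩
  · intro h
    have := congrFun h ⟨i, Nat.lt_of_succ_lt hi⟩
    simp only [swapMove, Function.comp_apply, Equiv.swap_apply_left] at this
    omega
  · obtain ⟨n, rfl⟩ : ∃ n, N = n + 1 := ⟨N - 1, by omega⟩
    have hs := sum_phi n v
    refine ⟨Or.inl ⟨?_, ?_⟩, ?_⟩
    · intro k _ _
      apply Finset.sum_le_sum
      intro j _
      split_ifs
      · rw [phi_eq, decSort_comp_perm]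
        apply decSort_mono
        intro i
        by_cases h : i = 0
        · subst h
          simp
        · rw [Function.update_of_ne h]
      · exact le_rfl
    · intro h
      have h1 := sum_decSort (n + 1) v
      rw [h, sum_decSort] at h1
      omega
    · intro h
      rw [← h] at hs
      omega
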